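/- Let b ≥ 2 and ℓ ≥ 2 be integers, let ψ_ℓ : [0,1) → [0,1] be the digit function ψ_ℓ(x) = Σ_{i=1}^∞ ξ_i b^{−i(ℓ−1)} (where ξ_i are the b-adic digits of x, not eventually b−1), C = ∫_0^1 ψ_ℓ(x) dx > 0, and A = {(x,y) ∈ [0,1]² : ψ_ℓ(x) ≥ y}. Fix an integer t ≥ 0. Then there exists a constant Δ > 0 and m_0 such that for all m ≥ m_0 and every (t,m,2)-net P in base b, with N = #(P ∩ A) and y_0,…,y_{N−1} the first coordinates of the points of P ∩ A, one has sup_{u ∈ [0,1]} |(1/N) Σ_{n=0}^{N−1} 1_{[0,u)}(y_n) − (1/C) ∫_0^u ψ_ℓ(z) dz| ≤ Δ · N^{−(1 − 1/ℓ)}. -/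

import Mathlib

open MeasureTheory Set

/-- The digit function `ψ_ℓ(x) = ∑_{i≥1} ξ_i b^{-i(ℓ-1)}`, where
`ξ_i = ⌊b^i x⌋ - b⌊b^{i-1} x⌋` are the `b`-adic digits of `x` (not eventually `b-1`). -/
noncomputable def psiDigit (b ℓ : ℕ) (x : ℝ) : ℝ :=
  ∑' i : ℕ, ((⌊(b : ℝ) ^ (i + 1) * x⌋ - (b : ℤ) * ⌊(b : ℝ) ^ i * x⌋ : ℤ) : ℝ)
    / (b : ℝ) ^ ((i + 1) * (ℓ - 1))

/-- The region `A = {(x,y) ∈ [0,1]² : ψ_ℓ(x) ≥ y}`. -/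
noncomputable def regionA (b ℓ : ℕ) : Set (ℝ × ℝ) :=
  {p | p.1 ∈ Icc (0 : ℝ) 1 ∧ p.2 ∈ Icc (0 : ℝ) 1 ∧ p.2 ≤ psiDigit b ℓ p.1}

/-- A 2-dimensional `b`-adic elementary interval of order `k`. -/
def IsElemInterval2 (b k : ℕ) (E : Set (ℝ × ℝ)) : Prop :=
  ∃ d₁ d₂ a₁ a₂ : ℕ, a₁ < b ^ d₁ ∧ a₂ < b ^ d₂ ∧ d₁ + d₂ = k ∧
    E = Ico ((a₁ : ℝ) / b ^ d₁) (((a₁ : ℝ) + 1) / b ^ d₁)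
          ×ˢ Ico ((a₂ : ℝ) / b ^ d₂) (((a₂ : ℝ) + 1) / b ^ d₂)

/-- `x` is a `(t,m,2)`-net in base `b`: `b^m` points of `[0,1)²` such that every `b`-adic
elementary interval of order at most `m - t` is fair with respect to the point set. -/
def IsNet2 (b tp m : ℕ) (x : Fin (b ^ m) → ℝ × ℝ) : Prop :=
  (∀ n, x n ∈ Ico (0 : ℝ) 1 ×ˢ Ico (0 : ℝ) 1) ∧
  ∀ k ≤ m - tp, ∀ E : Set (ℝ × ℝ), IsElemInterval2 b k E →
    (1 / (b ^ m : ℝ)) * ∑ n, E.indicator (fun _ => (1 : ℝ)) (x n) = (volume E).toReal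

noncomputable def dterm (b ℓ : ℕ) (x : ℝ) (i : ℕ) : ℝ :=
  ((⌊(b : ℝ) ^ (i + 1) * x⌋ - (b : ℤ) * ⌊(b : ℝ) ^ i * x⌋ : ℤ) : ℝ)
    / (b : ℝ) ^ ((i + 1) * (ℓ - 1))

lemma digit_bounds (b : ℕ) (hb : 2 ≤ b) (z : ℝ) :
    0 ≤ ⌊(b : ℝ) * z⌋ - (b : ℤ) * ⌊z⌋ ∧ ⌊(b : ℝ) * z⌋ - (b : ℤ) * ⌊z⌋ ≤ b - 1 := by
  have hb0 : (0 : ℝ) < b := by positivity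
  constructor
  · have : (b : ℤ) * ⌊z⌋ ≤ ⌊(b : ℝ) * z⌋ := by
      rw [Int.le_floor]; push_cast
      exact mul_le_mul_of_nonneg_left (Int.floor_le z) hb0.le
    linarith
  · have : ⌊(b : ℝ) * z⌋ < (b : ℤ) * (⌊z⌋ + 1) := by
      rw [Int.floor_lt]; push_cast
      exact mul_lt_mul_of_pos_left (Int.lt_floor_add_one z) hb0
    nlinarith

lemma dterm_bounds (b ℓ : ℕ) (hb : 2 ≤ b) (hℓ : 2 ≤ ℓ) (x : ℝ) (i : ℕ) :
    0 ≤ dterm b ℓ x i ∧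
      dterm b ℓ x i ≤ (1 / (b : ℝ) ^ (i * (ℓ - 1)) - 1 / (b : ℝ) ^ ((i + 1) * (ℓ - 1))) := by
  have hb0 : (0 : ℝ) < b := by positivity
  have hb1 : (1 : ℝ) ≤ b := by exact_mod_cast (by omega : 1 ≤ b)
  have h := digit_bounds b hb ((b : ℝ) ^ i * x)
  have e : (b : ℝ) * ((b : ℝ) ^ i * x) = (b : ℝ) ^ (i + 1) * x := by ring
  rw [e] at h
  unfold dterm
  have h1 : (0 : ℝ) ≤ ((⌊(b : ℝ) ^ (i + 1) * x⌋ - (b : ℤ) * ⌊(b : ℝ) ^ i * x⌋ : ℤ) : ℝ) := by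
    exact_mod_cast h.1
  have h2 : ((⌊(b : ℝ) ^ (i + 1) * x⌋ - (b : ℤ) * ⌊(b : ℝ) ^ i * x⌋ : ℤ) : ℝ) ≤ (b : ℝ) - 1 := by
    exact_mod_cast h.2
  refine ⟨by positivity, ?_⟩
  have e2 : (i + 1) * (ℓ - 1) = i * (ℓ - 1) + (ℓ - 1) := by ring
  have h3 : (b : ℝ) ≤ (b : ℝ) ^ (ℓ - 1) := le_self_pow₀ hb1 (by omega)
  have e3 : 1 / (b : ℝ) ^ (i * (ℓ - 1)) - 1 / (b : ℝ) ^ ((i + 1) * (ℓ - 1))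
      = ((b : ℝ) ^ (ℓ - 1) - 1) / (b : ℝ) ^ ((i + 1) * (ℓ - 1)) := by
    rw [e2, pow_add]; field_simp
  rw [e3]
  gcongr
  linarith

lemma dterm_sum_le (b ℓ : ℕ) (hb : 2 ≤ b) (hℓ : 2 ≤ ℓ) (x : ℝ) (d n : ℕ) :
    ∑ i ∈ Finset.range n, dterm b ℓ x (i + d) ≤ 1 / (b : ℝ) ^ (d * (ℓ - 1)) := by
  have : ∑ i ∈ Finset.range n, dterm b ℓ x (i + d) ≤
      1 / (b : ℝ) ^ (d * (ℓ - 1)) - 1 / (b : ℝ) ^ ((n + d) * (ℓ - 1)) := by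
    induction n with
    | zero => simp
    | succ n ih =>
      rw [Finset.sum_range_succ]
      have := (dterm_bounds b ℓ hb hℓ x (n + d)).2
      have e : n + 1 + d = n + d + 1 := by ring
      rw [e]; linarith
  have h : (0 : ℝ) ≤ 1 / (b : ℝ) ^ ((n + d) * (ℓ - 1)) := by positivity
  linarith

lemma dterm_summable (b ℓ : ℕ) (hb : 2 ≤ b) (hℓ : 2 ≤ ℓ) (x : ℝ) : Summable (dterm b ℓ x) :=
  summable_of_sum_range_le (fun i => (dterm_bounds b ℓ hb hℓ x i).1)
    (fun n => by simpa using dterm_sum_le b ℓ hb hℓ x 0 n)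

lemma psi_split (b ℓ : ℕ) (hb : 2 ≤ b) (hℓ : 2 ≤ ℓ) (x : ℝ) (d : ℕ) :
    ∑ i ∈ Finset.range d, dterm b ℓ x i ≤ psiDigit b ℓ x ∧
    psiDigit b ℓ x ≤ ∑ i ∈ Finset.range d, dterm b ℓ x i + 1 / (b : ℝ) ^ (d * (ℓ - 1)) := by
  have hs := dterm_summable b ℓ hb hℓ x
  have e : psiDigit b ℓ x = ∑' i, dterm b ℓ x i := rfl
  rw [e, ← hs.sum_add_tsum_nat_add d]
  have h1 : 0 ≤ ∑' i, dterm b ℓ x (i + d) :=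
    tsum_nonneg (fun i => (dterm_bounds b ℓ hb hℓ x _).1)
  have h2 : ∑' i, dterm b ℓ x (i + d) ≤ 1 / (b : ℝ) ^ (d * (ℓ - 1)) :=
    Real.tsum_le_of_sum_range_le (fun i => (dterm_bounds b ℓ hb hℓ x _).1)
      (fun n => dterm_sum_le b ℓ hb hℓ x d n)
  constructor <;> linarith

lemma psi_nonneg (b ℓ : ℕ) (hb : 2 ≤ b) (hℓ : 2 ≤ ℓ) (x : ℝ) : 0 ≤ psiDigit b ℓ x := by
  simpa using (psi_split b ℓ hb hℓ x 0).1

lemma psi_le_one (b ℓ : ℕ) (hb : 2 ≤ b) (hℓ : 2 ≤ ℓ) (x : ℝ) : psiDigit b ℓ x ≤ 1 := by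
  simpa using (psi_split b ℓ hb hℓ x 0).2

lemma psi_measurable (b ℓ : ℕ) (hb : 2 ≤ b) (hℓ : 2 ≤ ℓ) : Measurable (psiDigit b ℓ) := by
  refine measurable_of_tendsto_metrizable (f := fun n x => ∑ i ∈ Finset.range n, dterm b ℓ x i)
    ?_ ?_
  · intro n
    unfold dterm
    refine Finset.measurable_sum _ (fun i _ => ?_)
    refine Measurable.div_const ?_ _
    push_cast
    have h : ∀ j : ℕ, Measurable (fun x : ℝ => ((⌊(b : ℝ) ^ j * x⌋ : ℤ) : ℝ)) := fun j =>
      (measurable_from_top (f := fun z : ℤ => (z : ℝ))).comp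
        (Int.measurable_floor.comp (measurable_const.mul measurable_id))
    exact (h _).sub ((h _).const_mul _)
  · rw [tendsto_pi_nhds]
    intro x
    exact (dterm_summable b ℓ hb hℓ x).hasSum.tendsto_sum_nat

lemma psi_integrableOn (b ℓ : ℕ) (hb : 2 ≤ b) (hℓ : 2 ≤ ℓ) (u v : ℝ) :
    IntegrableOn (psiDigit b ℓ) (Ico u v) := by
  refine Measure.integrableOn_of_bounded (M := 1) (by simp)
    (psi_measurable b ℓ hb hℓ).aestronglyMeasurable ?_
  refine Filter.Eventually.of_forall (fun x => ?_)
  rw [Real.norm_eq_abs, abs_of_nonneg (psi_nonneg b ℓ hb hℓ x)]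
  exact psi_le_one b ℓ hb hℓ x

lemma floor_eq_of_col (b : ℕ) (hb : 2 ≤ b) (d a i : ℕ) (hi : i ≤ d) (x : ℝ)
    (hx : x ∈ Ico ((a : ℝ) / b ^ d) (((a : ℝ) + 1) / b ^ d)) :
    ⌊(b : ℝ) ^ i * x⌋ = ((a / b ^ (d - i) : ℕ) : ℤ) := by
  have hb0 : (0 : ℝ) < b := by positivity
  obtain ⟨h1, h2⟩ := hx
  rw [div_le_iff₀ (by positivity)] at h1
  rw [lt_div_iff₀ (by positivity)] at h2
  have e : (b : ℝ) ^ d = b ^ i * b ^ (d - i) := by rw [← pow_add]; congr 1; omega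
  have hp : (0 : ℝ) < (b : ℝ) ^ (d - i) := by positivity
  have hpn : 0 < b ^ (d - i) := by positivity
  rw [Int.floor_eq_iff]
  constructor
  · have : (a / b ^ (d - i)) * b ^ (d - i) ≤ a := Nat.div_mul_le_self _ _
    have : (((a / b ^ (d - i) : ℕ)) : ℝ) * (b : ℝ) ^ (d - i) ≤ a := by exact_mod_cast this
    rw [Int.cast_natCast]
    refine le_of_mul_le_mul_right ?_ hp
    rw [e] at h1
    linarith
  · have : a + 1 ≤ (a / b ^ (d - i) + 1) * b ^ (d - i) := by
      have := Nat.lt_div_mul_add (a := a) hpn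
      nlinarith
    have : (a : ℝ) + 1 ≤ (((a / b ^ (d - i) : ℕ) : ℝ) + 1) * (b : ℝ) ^ (d - i) := by
      exact_mod_cast this
    rw [Int.cast_natCast]
    refine lt_of_mul_lt_mul_right ?_ hp.le
    rw [e] at h2
    linarith

lemma psi_col (b ℓ : ℕ) (hb : 2 ≤ b) (hℓ : 2 ≤ ℓ) (d a : ℕ) :
    ∃ v : ℝ, 0 ≤ v ∧ v ≤ 1 ∧ ∀ x ∈ Ico ((a : ℝ) / b ^ d) (((a : ℝ) + 1) / b ^ d),
      v ≤ psiDigit b ℓ x ∧ psiDigit b ℓ x ≤ v + 1 / (b : ℝ) ^ (d * (ℓ - 1)) := by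
  refine ⟨∑ i ∈ Finset.range d, dterm b ℓ ((a : ℝ) / b ^ d) i, ?_, ?_, ?_⟩
  · exact Finset.sum_nonneg (fun i _ => (dterm_bounds b ℓ hb hℓ _ i).1)
  · exact (psi_split b ℓ hb hℓ _ d).1.trans (psi_le_one b ℓ hb hℓ _)
  · intro x hx
    have hb0 : (0 : ℝ) < b := by positivity
    have hx0 : (a : ℝ) / b ^ d ∈ Ico ((a : ℝ) / b ^ d) (((a : ℝ) + 1) / b ^ d) := by
      refine ⟨le_rfl, ?_⟩
      gcongr; linarith
    have : ∑ i ∈ Finset.range d, dterm b ℓ ((a : ℝ) / b ^ d) i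
        = ∑ i ∈ Finset.range d, dterm b ℓ x i := by
      refine Finset.sum_congr rfl (fun i hi => ?_)
      rw [Finset.mem_range] at hi
      unfold dterm
      rw [floor_eq_of_col b hb d a (i + 1) (by omega) x hx, floor_eq_of_col b hb d a i (by omega) x hx,
        floor_eq_of_col b hb d a (i + 1) (by omega) _ hx0, floor_eq_of_col b hb d a i (by omega) _ hx0]
    rw [this]
    exact psi_split b ℓ hb hℓ x d

lemma walk (F : ℝ → ℝ) (b : ℕ) (hb : 2 ≤ b) (K : ℝ) (k M : ℕ) (hkM : k ≤ M)
    (h : ∀ d, k ≤ d → d ≤ M → ∀ a : ℕ, a < b ^ d →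
      |F (((a : ℝ) + 1) / b ^ d) - F ((a : ℝ) / b ^ d)| ≤ K)
    (h0 : F 0 = 0)
    (hlast : ∀ a : ℕ, a < b ^ M → ∀ u ∈ Ico ((a : ℝ) / b ^ M) (((a : ℝ) + 1) / b ^ M),
      |F u - F ((a : ℝ) / b ^ M)| ≤ K) (u : ℝ) (hu : u ∈ Icc (0 : ℝ) 1) :
    |F u| ≤ K * ((b : ℝ) ^ k + b * ((M : ℝ) - k) + 1) := by
  have hb0 : (0 : ℝ) < b := by positivity
  have hK : 0 ≤ K := (abs_nonneg _).trans (h k le_rfl hkM 0 (by positivity))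
  have hmulti : ∀ d, k ≤ d → d ≤ M → ∀ a n : ℕ, a + n ≤ b ^ d →
      |F (((a + n : ℕ) : ℝ) / b ^ d) - F ((a : ℝ) / b ^ d)| ≤ K * n := by
    intro d h1 h2 a n
    induction n with
    | zero => simp
    | succ n ih =>
      intro hn
      have i1 := ih (by omega)
      have i2 := h d h1 h2 (a + n) (by omega)
      have e : ((a + (n + 1) : ℕ) : ℝ) = ((a + n : ℕ) : ℝ) + 1 := by push_cast; ring
      rw [e]
      have := abs_sub_le (F ((((a + n : ℕ) : ℝ) + 1) / b ^ d)) (F (((a + n : ℕ) : ℝ) / b ^ d))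
        (F ((a : ℝ) / b ^ d))
      push_cast at *
      linarith
  have hq : ∀ d, (⌊(b : ℝ) ^ d * u⌋₊) ≤ b ^ d := by
    intro d
    have : (b : ℝ) ^ d * u ≤ ((b ^ d : ℕ) : ℝ) := by
      push_cast
      exact mul_le_of_le_one_right (by positivity) hu.2
    exact (Nat.floor_le_floor this).trans (by rw [Nat.floor_natCast])
  have hind : ∀ n, k + n ≤ M →
      |F ((⌊(b : ℝ) ^ (k + n) * u⌋₊ : ℝ) / b ^ (k + n))| ≤ K * ((b : ℝ) ^ k + b * n) := by
    intro n
    induction n with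
    | zero =>
      intro _
      have := hmulti k le_rfl hkM 0 ⌊(b : ℝ) ^ k * u⌋₊ (by simpa using hq k)
      simp only [zero_add, Nat.cast_zero, zero_div, h0, sub_zero] at this
      have h3 : (⌊(b : ℝ) ^ k * u⌋₊ : ℝ) ≤ (b : ℝ) ^ k := by exact_mod_cast hq k
      simp only [add_zero, Nat.cast_zero, mul_zero]
      exact this.trans (mul_le_mul_of_nonneg_left h3 hK)
    | succ n ih =>
      intro hn
      have i1 := ih (by omega)
      set q := ⌊(b : ℝ) ^ (k + n) * u⌋₊ with hqd
      set q' := ⌊(b : ℝ) ^ (k + (n + 1)) * u⌋₊ with hqd'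
      have ex : (b : ℝ) ^ (k + (n + 1)) * u = b * ((b : ℝ) ^ (k + n) * u) := by ring
      have hnn : 0 ≤ (b : ℝ) ^ (k + n) * u := mul_nonneg (by positivity) hu.1
      have l1 : b * q ≤ q' := by
        rw [hqd', ex]
        apply Nat.le_floor
        push_cast
        exact mul_le_mul_of_nonneg_left (Nat.floor_le hnn) hb0.le
      have l2 : q' ≤ b * q + b := by
        have : (b : ℝ) * ((b : ℝ) ^ (k + n) * u) ≤ ((b * q + b : ℕ) : ℝ) := by
          push_cast
          have := Nat.lt_floor_add_one ((b : ℝ) ^ (k + n) * u)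
          nlinarith
        rw [hqd', ex]
        exact (Nat.floor_le_floor this).trans (by rw [Nat.floor_natCast])
      obtain ⟨r, hr⟩ := Nat.exists_eq_add_of_le l1
      have hrb : r ≤ b := by omega
      have i2 := hmulti (k + (n + 1)) (by omega) hn (b * q) r (by rw [← hr]; exact hq _)
      rw [← hr] at i2
      have e : ((b * q : ℕ) : ℝ) / (b : ℝ) ^ (k + (n + 1)) = (q : ℝ) / (b : ℝ) ^ (k + n) := by
        push_cast
        rw [show k + (n + 1) = k + n + 1 by ring, pow_succ]
        field_simp
      rw [e] at i2
      have hrb' : K * (r : ℝ) ≤ K * b := mul_le_mul_of_nonneg_left (by exact_mod_cast hrb) hK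
      have := abs_sub_abs_le_abs_sub (F ((q' : ℝ) / (b : ℝ) ^ (k + (n + 1))))
        (F ((q : ℝ) / (b : ℝ) ^ (k + n)))
      push_cast
      nlinarith
  have hfin := hind (M - k) (by omega)
  rw [show k + (M - k) = M by omega, Nat.cast_sub hkM] at hfin
  have hnn : 0 ≤ (b : ℝ) ^ M * u := mul_nonneg (by positivity) hu.1
  have hl : |F u - F ((⌊(b : ℝ) ^ M * u⌋₊ : ℝ) / b ^ M)| ≤ K := by
    rcases (hq M).lt_or_eq with hlt | heq
    · refine hlast _ hlt u ⟨?_, ?_⟩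
      · rw [div_le_iff₀ (by positivity), mul_comm u]; exact Nat.floor_le hnn
      · rw [lt_div_iff₀ (by positivity), mul_comm u]; exact Nat.lt_floor_add_one _
    · have h1 : (⌊(b : ℝ) ^ M * u⌋₊ : ℝ) ≤ (b : ℝ) ^ M * u := Nat.floor_le hnn
      have h2 : (⌊(b : ℝ) ^ M * u⌋₊ : ℝ) = (b : ℝ) ^ M := by rw [heq]; push_cast; ring
      have h3 : u = 1 := by
        refine le_antisymm hu.2 ?_
        rw [h2] at h1
        have hp : (0 : ℝ) < (b : ℝ) ^ M := by positivity
        exact (le_mul_iff_one_le_right hp).1 h1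
      rw [h2, h3, div_self (by positivity)]
      simpa using hK
  have := abs_sub_abs_le_abs_sub (F u) (F ((⌊(b : ℝ) ^ M * u⌋₊ : ℝ) / b ^ M))
  linarith

open Classical in
/-- number of indices with a property, as a real -/
noncomputable def cnt {n : ℕ} (p : Fin n → Prop) : ℝ := ((Finset.univ.filter p).card : ℝ)

lemma cnt_nonneg {n : ℕ} (p : Fin n → Prop) : 0 ≤ cnt p := Nat.cast_nonneg _

lemma cnt_mono {n : ℕ} {p q : Fin n → Prop} (h : ∀ i, p i → q i) : cnt p ≤ cnt q := by
  classical
  unfold cnt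
  exact_mod_cast Finset.card_le_card (Finset.monotone_filter_right _ (fun i _ => h i))

lemma cnt_congr {n : ℕ} {p q : Fin n → Prop} (h : ∀ i, p i ↔ q i) : cnt p = cnt q :=
  le_antisymm (cnt_mono fun i => (h i).1) (cnt_mono fun i => (h i).2)

lemma cnt_add {n : ℕ} {p q r : Fin n → Prop} (h : ∀ i, r i ↔ p i ∨ q i)
    (hd : ∀ i, p i → ¬ q i) : cnt r = cnt p + cnt q := by
  rw [cnt_congr h]
  classical
  unfold cnt
  rw [← Nat.cast_add, ← Finset.card_union_of_disjoint
    (Finset.disjoint_filter.2 (fun i _ => hd i))]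
  congr 2
  ext i
  simp

lemma cnt_box (b tp m : ℕ) (hb : 2 ≤ b) (htm : tp ≤ m) (x : Fin (b ^ m) → ℝ × ℝ)
    (hx : IsNet2 b tp m x) (d e a j : ℕ) (hde : d + e = m - tp) (ha : a < b ^ d) (hj : j < b ^ e) :
    cnt (fun n => (x n).1 ∈ Ico ((a : ℝ) / b ^ d) (((a : ℝ) + 1) / b ^ d) ∧
      (x n).2 ∈ Ico ((j : ℝ) / b ^ e) (((j : ℝ) + 1) / b ^ e)) = (b : ℝ) ^ tp := by
  have hb0 : (0 : ℝ) < b := by positivity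
  have := hx.2 (d + e) hde.le _ ⟨d, e, a, j, ha, hj, rfl, rfl⟩
  rw [Measure.volume_eq_prod, Measure.prod_prod, Real.volume_Ico, Real.volume_Ico,
    ENNReal.toReal_mul, ENNReal.toReal_ofReal, ENNReal.toReal_ofReal] at this
  rotate_left
  · rw [sub_nonneg]; gcongr; linarith
  · rw [sub_nonneg]; gcongr; linarith
  have e1 : cnt (fun n => (x n).1 ∈ Ico ((a : ℝ) / b ^ d) (((a : ℝ) + 1) / b ^ d) ∧
      (x n).2 ∈ Ico ((j : ℝ) / b ^ e) (((j : ℝ) + 1) / b ^ e)) =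
      ∑ n, (Ico ((a : ℝ) / b ^ d) (((a : ℝ) + 1) / b ^ d)
          ×ˢ Ico ((j : ℝ) / b ^ e) (((j : ℝ) + 1) / b ^ e)).indicator (fun _ => (1 : ℝ)) (x n) := by
    classical
    unfold cnt
    rw [Finset.card_filter]
    push_cast
    refine Finset.sum_congr rfl (fun n _ => ?_)
    simp only [Set.indicator_apply, Set.mem_prod]
  rw [e1]
  have e2 : (b : ℝ) ^ m = b ^ d * b ^ e * b ^ tp := by
    rw [← pow_add, ← pow_add]; congr 1; omega
  rw [e2] at this
  field_simp at this
  linarith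

lemma cnt_strip (b tp m : ℕ) (hb : 2 ≤ b) (htm : tp ≤ m) (x : Fin (b ^ m) → ℝ × ℝ)
    (hx : IsNet2 b tp m x) (d e a j : ℕ) (hde : d + e = m - tp) (ha : a < b ^ d) (hj : j ≤ b ^ e) :
    cnt (fun n => (x n).1 ∈ Ico ((a : ℝ) / b ^ d) (((a : ℝ) + 1) / b ^ d) ∧
      (x n).2 < (j : ℝ) / b ^ e) = j * (b : ℝ) ^ tp := by
  have hb0 : (0 : ℝ) < b := by positivity
  induction j with
  | zero =>
    rw [cnt_congr (q := fun _ => False)]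
    · simp [cnt]
    · intro n
      have := (hx.1 n).2.1
      simp only [Nat.cast_zero, zero_div, iff_false, not_and, not_lt]
      intro _; exact this
  | succ j ih =>
    have h1 := ih (by omega)
    have h2 := cnt_box b tp m hb htm x hx d e a j hde ha (by omega)
    have hlt : (j : ℝ) / b ^ e < ((j : ℝ) + 1) / b ^ e := by gcongr; linarith
    push_cast
    rw [add_mul, one_mul, ← h1, ← h2]
    refine cnt_add ?_ ?_
    · intro n
      constructor
      · rintro ⟨h, h'⟩
        rcases lt_or_ge (x n).2 ((j : ℝ) / b ^ e) with h3 | h3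
        · exact Or.inl ⟨h, h3⟩
        · exact Or.inr ⟨h, h3, h'⟩
      · rintro (⟨h, h'⟩ | ⟨h, h'⟩)
        · exact ⟨h, h'.trans hlt⟩
        · exact ⟨h, h'.2⟩
    · rintro n ⟨_, h⟩ ⟨_, h', _⟩
      exact absurd h (not_lt.2 h')

lemma int_bounds (b ℓ : ℕ) (hb : 2 ≤ b) (hℓ : 2 ≤ ℓ) (u v p q : ℝ) (huv : u ≤ v)
    (h : ∀ x ∈ Ico u v, p ≤ psiDigit b ℓ x ∧ psiDigit b ℓ x ≤ q) :
    p * (v - u) ≤ ∫ z in Ico u v, psiDigit b ℓ z ∧ ∫ z in Ico u v, psiDigit b ℓ z ≤ q * (v - u) := by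
  have hi := psi_integrableOn b ℓ hb hℓ u v
  have hc : ∀ c : ℝ, ∫ z in Ico u v, c = c * (v - u) := by
    intro c
    rw [setIntegral_const, Measure.real, Real.volume_Ico, ENNReal.toReal_ofReal (by linarith),
      smul_eq_mul, mul_comm]
  have hci : ∀ c : ℝ, IntegrableOn (fun _ => c) (Ico u v) := fun c =>
    integrableOn_const (by simp)
  constructor
  · rw [← hc]
    exact setIntegral_mono_on (hci p) hi measurableSet_Ico (fun x hx => (h x hx).1)
  · rw [← hc]
    exact setIntegral_mono_on hi (hci q) measurableSet_Ico (fun x hx => (h x hx).2)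

lemma column (b ℓ tp m : ℕ) (hb : 2 ≤ b) (hℓ : 2 ≤ ℓ) (htm : tp ≤ m) (x : Fin (b ^ m) → ℝ × ℝ)
    (hx : IsNet2 b tp m x) (d a : ℕ) (hd : d ≤ m - tp) (hd2 : m - tp ≤ d * ℓ) (ha : a < b ^ d) :
    |cnt (fun n => x n ∈ regionA b ℓ ∧
        (x n).1 ∈ Ico ((a : ℝ) / b ^ d) (((a : ℝ) + 1) / b ^ d))
      - (b : ℝ) ^ m * ∫ z in Ico ((a : ℝ) / b ^ d) (((a : ℝ) + 1) / b ^ d), psiDigit b ℓ z|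
      ≤ 2 * (b : ℝ) ^ tp := by
  have hb0 : (0 : ℝ) < b := by positivity
  have hb1 : (1 : ℝ) ≤ b := by exact_mod_cast (by omega : 1 ≤ b)
  obtain ⟨e, he⟩ := Nat.exists_eq_add_of_le hd
  obtain ⟨v, hv0, hv1, hv⟩ := psi_col b ℓ hb hℓ d a
  have hpe : (0 : ℝ) < (b : ℝ) ^ e := by positivity
  have hT : (0 : ℝ) < (b : ℝ) ^ tp := by positivity
  have hw : 1 / (b : ℝ) ^ (d * (ℓ - 1)) ≤ 1 / (b : ℝ) ^ e := by
    refine one_div_pow_le_one_div_pow_of_le hb1 ?_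
    · have : d * ℓ = d * (ℓ - 1) + d := by
        obtain ⟨l, rfl⟩ : ∃ l, ℓ = l + 1 := ⟨ℓ - 1, by omega⟩
        simp; ring
      omega
  set I := Ico ((a : ℝ) / b ^ d) (((a : ℝ) + 1) / b ^ d) with hI
  set J := ⌊v * (b : ℝ) ^ e⌋₊ with hJ
  have hJ1 : (J : ℝ) ≤ v * (b : ℝ) ^ e := Nat.floor_le (by positivity)
  have hJ2 : v * (b : ℝ) ^ e < J + 1 := Nat.lt_floor_add_one _
  have hJb : J ≤ b ^ e := by
    have : (J : ℝ) ≤ (b : ℝ) ^ e := hJ1.trans (mul_le_of_le_one_left hpe.le hv1)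
    exact_mod_cast this
  have hlow : (J : ℝ) * (b : ℝ) ^ tp ≤ cnt (fun n => x n ∈ regionA b ℓ ∧ (x n).1 ∈ I) := by
    rw [← cnt_strip b tp m hb htm x hx d e a J he.symm ha hJb]
    refine cnt_mono ?_
    rintro n ⟨h1, h2⟩
    have hn := hx.1 n
    refine ⟨⟨⟨hn.1.1, hn.1.2.le⟩, ⟨hn.2.1, hn.2.2.le⟩, ?_⟩, h1⟩
    have := (hv _ h1).1
    rw [lt_div_iff₀ hpe] at h2
    have : (x n).2 * (b : ℝ) ^ e ≤ v * (b : ℝ) ^ e := by linarith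
    exact (le_of_mul_le_mul_right this hpe).trans (hv _ h1).1
  have hup : cnt (fun n => x n ∈ regionA b ℓ ∧ (x n).1 ∈ I) ≤ ((J : ℝ) + 2) * (b : ℝ) ^ tp := by
    have hs := cnt_strip b tp m hb htm x hx d e a (min (J + 2) (b ^ e)) he.symm ha (min_le_right _ _)
    have h3 : ((min (J + 2) (b ^ e) : ℕ) : ℝ) ≤ (J : ℝ) + 2 := by
      exact_mod_cast min_le_left (J + 2) (b ^ e)
    refine le_trans ?_ (mul_le_mul_of_nonneg_right h3 hT.le)
    rw [← hs]
    refine cnt_mono ?_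
    rintro n ⟨h1, h2⟩
    refine ⟨h2, ?_⟩
    rw [lt_div_iff₀ hpe]
    have h4 : (x n).2 ≤ v + 1 / (b : ℝ) ^ e := (h1.2.2.trans (hv _ h2).2).trans (by linarith)
    have h5 : (x n).2 * (b : ℝ) ^ e ≤ v * (b : ℝ) ^ e + 1 := by
      calc (x n).2 * (b : ℝ) ^ e ≤ (v + 1 / (b : ℝ) ^ e) * (b : ℝ) ^ e :=
            mul_le_mul_of_nonneg_right h4 hpe.le
        _ = _ := by field_simp
    have h6 : (x n).2 * (b : ℝ) ^ e < (b : ℝ) ^ e := mul_lt_of_lt_one_left hpe (hx.1 n).2.2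
    push_cast
    exact lt_min (by linarith) h6
  have hle : (a : ℝ) / b ^ d ≤ ((a : ℝ) + 1) / b ^ d := by gcongr; linarith
  have hint := int_bounds b ℓ hb hℓ _ _ v (v + 1 / (b : ℝ) ^ e) hle
    (fun z hz => ⟨(hv z hz).1, (hv z hz).2.trans (by linarith)⟩)
  have ew : ((a : ℝ) + 1) / b ^ d - (a : ℝ) / b ^ d = 1 / (b : ℝ) ^ d := by ring
  rw [ew] at hint
  have em : (b : ℝ) ^ m = b ^ d * b ^ e * b ^ tp := by
    rw [← pow_add, ← pow_add]; congr 1; omega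
  have hbm : (0 : ℝ) < (b : ℝ) ^ m := by positivity
  have i1 : (J : ℝ) * (b : ℝ) ^ tp ≤ (b : ℝ) ^ m * ∫ z in I, psiDigit b ℓ z := by
    refine le_trans ?_ (mul_le_mul_of_nonneg_left hint.1 hbm.le)
    have : (b : ℝ) ^ m * (v * (1 / (b : ℝ) ^ d)) = (v * (b : ℝ) ^ e) * (b : ℝ) ^ tp := by
      rw [em]; field_simp
    rw [this]
    exact mul_le_mul_of_nonneg_right hJ1 hT.le
  have i2 : (b : ℝ) ^ m * ∫ z in I, psiDigit b ℓ z ≤ ((J : ℝ) + 2) * (b : ℝ) ^ tp := by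
    refine le_trans (mul_le_mul_of_nonneg_left hint.2 hbm.le) ?_
    have : (b : ℝ) ^ m * ((v + 1 / (b : ℝ) ^ e) * (1 / (b : ℝ) ^ d))
        = (v * (b : ℝ) ^ e + 1) * (b : ℝ) ^ tp := by
      rw [em]; field_simp
    rw [this]
    exact mul_le_mul_of_nonneg_right (by linarith) hT.le
  rw [abs_le]
  constructor <;> linarith

/-- the local error function -/
noncomputable def errF (b ℓ m : ℕ) (x : Fin (b ^ m) → ℝ × ℝ) (u : ℝ) : ℝ :=
  cnt (fun n => x n ∈ regionA b ℓ ∧ (x n).1 < u)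
    - (b : ℝ) ^ m * ∫ z in Ico (0 : ℝ) u, psiDigit b ℓ z

lemma errF_sub (b ℓ m : ℕ) (hb : 2 ≤ b) (hℓ : 2 ≤ ℓ) (x : Fin (b ^ m) → ℝ × ℝ) (u v : ℝ)
    (hu : 0 ≤ u) (huv : u ≤ v) :
    errF b ℓ m x v - errF b ℓ m x u = cnt (fun n => x n ∈ regionA b ℓ ∧ (x n).1 ∈ Ico u v)
      - (b : ℝ) ^ m * ∫ z in Ico u v, psiDigit b ℓ z := by
  have h1 : cnt (fun n => x n ∈ regionA b ℓ ∧ (x n).1 < v) =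
      cnt (fun n => x n ∈ regionA b ℓ ∧ (x n).1 < u)
      + cnt (fun n => x n ∈ regionA b ℓ ∧ (x n).1 ∈ Ico u v) := by
    refine cnt_add ?_ ?_
    · intro n
      constructor
      · rintro ⟨h, h'⟩
        rcases lt_or_ge (x n).1 u with h3 | h3
        · exact Or.inl ⟨h, h3⟩
        · exact Or.inr ⟨h, h3, h'⟩
      · rintro (⟨h, h'⟩ | ⟨h, h'⟩)
        · exact ⟨h, h'.trans_le huv⟩
        · exact ⟨h, h'.2⟩
    · rintro n ⟨_, h⟩ ⟨_, h', _⟩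
      exact absurd h (not_lt.2 h')
  have h2 : ∫ z in Ico 0 v, psiDigit b ℓ z =
      (∫ z in Ico 0 u, psiDigit b ℓ z) + ∫ z in Ico u v, psiDigit b ℓ z := by
    rw [← Ico_union_Ico_eq_Ico hu huv]
    refine setIntegral_union ?_ measurableSet_Ico (psi_integrableOn b ℓ hb hℓ _ _)
      (psi_integrableOn b ℓ hb hℓ _ _)
    rw [Set.disjoint_left]
    intro z h h'
    exact absurd h.2 (not_lt.2 h'.1)
  unfold errF
  rw [h1, h2]; ring

lemma errF_bound (b ℓ tp m : ℕ) (hb : 2 ≤ b) (hℓ : 2 ≤ ℓ) (htm : tp + 2 ≤ m)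
    (x : Fin (b ^ m) → ℝ × ℝ) (hx : IsNet2 b tp m x) (u : ℝ) (hu : u ∈ Icc (0 : ℝ) 1) :
    |errF b ℓ m x u| ≤ (2 * (b : ℝ) ^ tp * (b + b * ℓ + 1)) * (b : ℝ) ^ (m / ℓ) := by
  have hb0 : (0 : ℝ) < b := by positivity
  have hb1 : (1 : ℝ) ≤ b := by exact_mod_cast (by omega : 1 ≤ b)
  have hT : (0 : ℝ) < (b : ℝ) ^ tp := by positivity
  set M := m - tp with hM
  have hMl : M < ℓ * (M / ℓ + 1) := Nat.lt_mul_div_succ M (by omega)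
  have hk : M / ℓ + 1 ≤ M := by
    have : M / ℓ ≤ M / 2 := Nat.div_le_div_left hℓ (by omega)
    omega
  have key := walk (errF b ℓ m x) b hb (2 * (b : ℝ) ^ tp) (M / ℓ + 1) M hk ?_ ?_ ?_ u hu
  · refine key.trans ?_
    rw [mul_assoc (2 * (b : ℝ) ^ tp) ((b : ℝ) + b * ℓ + 1)]
    refine mul_le_mul_of_nonneg_left ?_ (by positivity)
    have h1 : (b : ℝ) ^ (M / ℓ + 1) ≤ b * (b : ℝ) ^ (m / ℓ) := by
      rw [pow_succ, mul_comm]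
      refine mul_le_mul_of_nonneg_left ?_ hb0.le
      exact pow_le_pow_right₀ hb1 (Nat.div_le_div_right (by omega))
    have h2 : (M : ℝ) ≤ ℓ * (b : ℝ) ^ (m / ℓ) := by
      have h3 : m < ℓ * (m / ℓ + 1) := Nat.lt_mul_div_succ m (by omega)
      have h4 : m / ℓ < b ^ (m / ℓ) := Nat.lt_pow_self (by omega)
      have h5 : ℓ * (m / ℓ + 1) ≤ ℓ * b ^ (m / ℓ) := Nat.mul_le_mul_left _ h4
      have : M ≤ ℓ * b ^ (m / ℓ) := by omega
      exact_mod_cast this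
    have h3 : (1 : ℝ) ≤ (b : ℝ) ^ (m / ℓ) := one_le_pow₀ hb1
    have h4 : (b : ℝ) * ((M : ℝ) - ((M / ℓ + 1 : ℕ) : ℝ)) ≤ b * (ℓ * (b : ℝ) ^ (m / ℓ)) := by
      refine mul_le_mul_of_nonneg_left ?_ hb0.le
      have : (0 : ℝ) ≤ ((M / ℓ + 1 : ℕ) : ℝ) := Nat.cast_nonneg _
      linarith
    linarith
  · intro d hd1 hd2 a ha
    rw [errF_sub b ℓ m hb hℓ x ((a : ℝ) / b ^ d) (((a : ℝ) + 1) / b ^ d) (by positivity)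
      (by gcongr; linarith)]
    refine column b ℓ tp m hb hℓ (by omega) x hx d a hd2 ?_ ha
    have : ℓ * (M / ℓ + 1) ≤ ℓ * d := Nat.mul_le_mul_left _ hd1
    rw [mul_comm d]; omega
  · unfold errF
    rw [cnt_congr (q := fun _ => False)]
    · simp [cnt]
    · intro n
      have := (hx.1 n).1.1
      simp only [iff_false, not_and, not_lt]
      intro _; exact this
  · intro a ha u hu
    rw [errF_sub b ℓ m hb hℓ x ((a : ℝ) / b ^ M) u (by positivity) hu.1]
    have c0 := cnt_nonneg (fun n => x n ∈ regionA b ℓ ∧ (x n).1 ∈ Ico ((a : ℝ) / b ^ M) u)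
    have c1 : cnt (fun n => x n ∈ regionA b ℓ ∧ (x n).1 ∈ Ico ((a : ℝ) / b ^ M) u)
        ≤ (b : ℝ) ^ tp := by
      rw [← cnt_box b tp m hb (by omega) x hx M 0 a 0 (by omega) ha (by simp)]
      refine cnt_mono ?_
      rintro n ⟨_, h⟩
      refine ⟨⟨h.1, h.2.trans hu.2⟩, ?_⟩
      simpa using (hx.1 n).2
    have hi := int_bounds b ℓ hb hℓ _ _ 0 1 hu.1
      (fun z _ => ⟨psi_nonneg b ℓ hb hℓ z, psi_le_one b ℓ hb hℓ z⟩)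
    have hbm : (0 : ℝ) < (b : ℝ) ^ m := by positivity
    have i0 : 0 ≤ (b : ℝ) ^ m * ∫ z in Ico ((a : ℝ) / b ^ M) u, psiDigit b ℓ z :=
      mul_nonneg hbm.le (by linarith [hi.1])
    have i1 : (b : ℝ) ^ m * ∫ z in Ico ((a : ℝ) / b ^ M) u, psiDigit b ℓ z ≤ (b : ℝ) ^ tp := by
      have em : (b : ℝ) ^ m = b ^ M * b ^ tp := by
        rw [← pow_add]; congr 1; omega
      have hw : u - (a : ℝ) / b ^ M ≤ 1 / (b : ℝ) ^ M := by
        have : ((a : ℝ) + 1) / b ^ M - (a : ℝ) / b ^ M = 1 / (b : ℝ) ^ M := by ring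
        linarith [hu.2]
      calc _ ≤ (b : ℝ) ^ m * (1 / (b : ℝ) ^ M) :=
            mul_le_mul_of_nonneg_left (by linarith [hi.2]) hbm.le
        _ = _ := by rw [em]; field_simp
    rw [abs_le]
    constructor <;> linarith

/-- **Convergence rate `N^{-(1-1/ℓ)}` for the digit density** (Example 1 of the paper):
for the target density `ψ_ℓ`, the acceptance-rejection sampler driven by `(t,m,2)`-nets in
base `b` produces samples `y_0,…,y_{N-1}` (the first coordinates of the accepted points)
whose star discrepancy with respect to `ψ_ℓ` is at most `Δ N^{-(1-1/ℓ)}`. -/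
theorem star_discrepancy_psiDigit_net (b : ℕ) (hb : 2 ≤ b) (ℓ : ℕ) (hℓ : 2 ≤ ℓ)
    (C : ℝ) (hC : C = ∫ x in Icc (0 : ℝ) 1, psiDigit b ℓ x) (hCpos : 0 < C)
    (tp : ℕ) :
    ∃ Δ : ℝ, 0 < Δ ∧ ∃ m₀ : ℕ, ∀ m : ℕ, m₀ ≤ m →
      ∀ x : Fin (b ^ m) → ℝ × ℝ, IsNet2 b tp m x →
      ∀ N : ℕ, N = Nat.card {n : Fin (b ^ m) // x n ∈ regionA b ℓ} →
      ∀ (y : Fin N → ℝ) (e : Fin N ≃ {n : Fin (b ^ m) // x n ∈ regionA b ℓ}),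
        (∀ k, y k = (x (e k)).1) →
        ∀ u ∈ Icc (0 : ℝ) 1,
          |(1 / (N : ℝ)) * ∑ k, (Ico (0 : ℝ) u).indicator (fun _ => (1 : ℝ)) (y k)
              - (1 / C) * ∫ z in Ico (0 : ℝ) u, psiDigit b ℓ z|
            ≤ Δ * (N : ℝ) ^ (-(1 - 1 / (ℓ : ℝ))) := by
  have hb0 : (0 : ℝ) < b := by positivity
  have hb1 : (1 : ℝ) ≤ b := by exact_mod_cast (by omega : 1 ≤ b)
  set K : ℝ := 2 * (b : ℝ) ^ tp * (b + b * ℓ + 1) with hK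
  have hKpos : 0 < K := by positivity
  have hℓ0 : (ℓ : ℝ) ≠ 0 := by positivity
  obtain ⟨n₀, hn₀⟩ := exists_nat_ge (2 * K / C)
  refine ⟨2 * K * (2 / C) ^ (1 / (ℓ : ℝ)), by positivity, ℓ * n₀ + tp + 2, ?_⟩
  intro m hm x hx N hN y e hy u hu
  have hC' : C = ∫ z in Ico (0 : ℝ) 1, psiDigit b ℓ z := by
    rw [hC, integral_Icc_eq_integral_Ico]
  set B : ℝ := (b : ℝ) ^ (m / ℓ) with hB
  have hBpos : 0 < B := by positivity
  have hEu := errF_bound b ℓ tp m hb hℓ (by omega) x hx u hu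
  have hE1 := errF_bound b ℓ tp m hb hℓ (by omega) x hx 1 ⟨zero_le_one, le_rfl⟩
  rw [← hK, ← hB] at hEu hE1
  have hNc : cnt (fun n => x n ∈ regionA b ℓ ∧ (x n).1 < 1) = N := by
    rw [cnt_congr (q := fun n => x n ∈ regionA b ℓ)
      (fun n => ⟨fun h => h.1, fun h => ⟨h, (hx.1 n).1.2⟩⟩)]
    classical
    unfold cnt
    rw [hN, Nat.card_eq_fintype_card, Fintype.card_subtype]
  have hS : ∑ k, (Ico (0 : ℝ) u).indicator (fun _ => (1 : ℝ)) (y k)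
      = cnt (fun n => x n ∈ regionA b ℓ ∧ (x n).1 < u) := by
    classical
    have h1 : ∀ k, (Ico (0 : ℝ) u).indicator (fun _ => (1 : ℝ)) (y k)
        = (fun s : {n : Fin (b ^ m) // x n ∈ regionA b ℓ} =>
          if (x s).1 < u then (1 : ℝ) else 0) (e k) := by
      intro k
      rw [hy k, Set.indicator_apply]
      have : (x (e k)).1 ∈ Ico (0 : ℝ) u ↔ (x (e k)).1 < u :=
        ⟨fun h => h.2, fun h => ⟨(hx.1 _).1.1, h⟩⟩
      simp only [this]
    rw [Finset.sum_congr rfl (fun k _ => h1 k), Equiv.sum_comp e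
      (fun s : {n : Fin (b ^ m) // x n ∈ regionA b ℓ} => if (x s).1 < u then (1 : ℝ) else 0)]
    unfold cnt
    have h2 : (Finset.univ.filter (fun n => x n ∈ regionA b ℓ ∧ (x n).1 < u))
        = (Finset.univ.filter (fun n => x n ∈ regionA b ℓ)).filter (fun n => (x n).1 < u) := by
      ext n; simp
    have h3 : ∑ n ∈ Finset.univ.filter (fun n => x n ∈ regionA b ℓ),
        (if (x n).1 < u then (1 : ℝ) else 0) =
        (((Finset.univ.filter (fun n => x n ∈ regionA b ℓ)).filter
          (fun n => (x n).1 < u)).card : ℝ) := by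
      rw [Finset.card_filter]; push_cast; rfl
    rw [← h2, Finset.sum_subtype (p := fun n => x n ∈ regionA b ℓ) _ (by intro n; simp)] at h3
    convert h3
  rw [hS]
  set G := ∫ z in Ico (0 : ℝ) u, psiDigit b ℓ z with hG
  set S := cnt (fun n => x n ∈ regionA b ℓ ∧ (x n).1 < u) with hSdef
  have hG0 : 0 ≤ G := setIntegral_nonneg measurableSet_Ico (fun z _ => psi_nonneg b ℓ hb hℓ z)
  have hGC : G ≤ C := by
    rw [hC']
    refine setIntegral_mono_set (psi_integrableOn b ℓ hb hℓ _ _)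
      (Filter.Eventually.of_forall (fun z => psi_nonneg b ℓ hb hℓ z)) ?_
    exact (Ico_subset_Ico_right hu.2).eventuallyLE
  have e1 : errF b ℓ m x 1 = N - (b : ℝ) ^ m * C := by
    unfold errF; rw [hNc, ← hC']
  have eu : errF b ℓ m x u = S - (b : ℝ) ^ m * G := rfl
  rw [e1] at hE1
  rw [eu] at hEu
  have hBm : B ^ ℓ ≤ (b : ℝ) ^ m := by
    rw [hB, ← pow_mul]
    exact pow_le_pow_right₀ hb1 (Nat.div_mul_le_self m ℓ)
  have hBn : 2 * K / C ≤ B := by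
    have h1 : n₀ ≤ m / ℓ := by
      rw [Nat.le_div_iff_mul_le (by omega), mul_comm]; omega
    have h2 : m / ℓ < b ^ (m / ℓ) := Nat.lt_pow_self (by omega)
    have h3 : n₀ ≤ b ^ (m / ℓ) := by omega
    have h4 : (n₀ : ℝ) ≤ B := by rw [hB]; exact_mod_cast h3
    linarith
  have hB1 : 1 ≤ B := one_le_pow₀ hb1
  have hB2 : B * B ≤ (b : ℝ) ^ m := by
    refine le_trans ?_ hBm
    rw [← sq]
    exact pow_le_pow_right₀ hB1 hℓ
  have hKB : K * B ≤ (b : ℝ) ^ m * C / 2 := by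
    rw [div_le_iff₀ hCpos] at hBn
    nlinarith
  have hNlow : (b : ℝ) ^ m * C / 2 ≤ N := by
    have := (abs_le.1 hE1).1
    linarith
  have hNpos : (0 : ℝ) < N := lt_of_lt_of_le (by positivity) hNlow
  have hBN : B ≤ (2 / C) ^ (1 / (ℓ : ℝ)) * (N : ℝ) ^ (1 / (ℓ : ℝ)) := by
    rw [← Real.mul_rpow (by positivity) hNpos.le]
    have h1 : B ^ ℓ ≤ 2 / C * N := by
      refine hBm.trans ?_
      rw [div_mul_eq_mul_div, le_div_iff₀ hCpos]; linarith
    calc B = (B ^ ℓ) ^ (1 / (ℓ : ℝ)) := by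
          rw [one_div, Real.pow_rpow_inv_natCast hBpos.le (by omega)]
      _ ≤ _ := Real.rpow_le_rpow (by positivity) h1 (by positivity)
  have hpw : (N : ℝ) ^ (-(1 - 1 / (ℓ : ℝ))) = (N : ℝ) ^ (1 / (ℓ : ℝ)) / N := by
    rw [show -(1 - 1 / (ℓ : ℝ)) = 1 / (ℓ : ℝ) - 1 by ring, Real.rpow_sub hNpos, Real.rpow_one]
  have hmain : |1 / (N : ℝ) * S - 1 / C * G| ≤ 2 * (K * B) / N := by
    have eq : 1 / (N : ℝ) * S - 1 / C * G
        = ((S - (b : ℝ) ^ m * G) - (G / C) * (N - (b : ℝ) ^ m * C)) / N := by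
      field_simp; ring
    rw [eq, abs_div, abs_of_pos hNpos]
    gcongr
    refine (abs_sub _ _).trans ?_
    rw [abs_mul, abs_of_nonneg (div_nonneg hG0 hCpos.le)]
    have : G / C ≤ 1 := (div_le_one hCpos).2 hGC
    have h3 := mul_le_mul this hE1 (abs_nonneg _) zero_le_one
    linarith
  refine hmain.trans ?_
  rw [hpw, ← mul_div_assoc]
  refine div_le_div_of_nonneg_right ?_ hNpos.le
  have := mul_le_mul_of_nonneg_left hBN (by positivity : 0 ≤ 2 * K)
  linarith
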